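/- Let n ≥ 4, let L be the permutation group induced by Sym(n) on ordered pairs of distinct elements of {1,…,n}, let (Γ,G) be a locally L pair, and let {x,y} be an edge of Γ. If G_{xy}^{[1]} ≠ 1, then n = 4 or n = 6 and G_{xy}^{[1]} is a 2-group. -/

import Mathlib

open MulAction Pointwise

/-- The set of ordered pairs of distinct elements of `{1,…,n}`. -/
abbrev OPairs (n : ℕ) : Type := {p : Fin n × Fin n // p.1 ≠ p.2}

/-- `Sym(n)` acts on the ordered pairs of distinct elements. -/
instance opairsAction (n : ℕ) : MulAction (Equiv.Perm (Fin n)) (OPairs n) where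
  smul σ p := ⟨(σ p.1.1, σ p.1.2), fun h => p.2 (σ.injective h)⟩
  one_smul p := rfl
  mul_smul σ τ p := rfl

/-- Every element of `G` is an automorphism of `Γ`. -/
def PreservesAdj {V : Type*} (Γ : SimpleGraph V) (G : Subgroup (Equiv.Perm V)) : Prop :=
  ∀ g ∈ G, ∀ u v : V, Γ.Adj u v ↔ Γ.Adj (g u) (g v)

/-- The pointwise stabiliser in `G` of the ball of radius `i` around `x`. -/
def ballStab {V : Type*} (Γ : SimpleGraph V) (G : Subgroup (Equiv.Perm V)) (x : V) (i : ℕ) :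
    Subgroup G :=
  ⨅ (v : V) (_ : Γ.dist x v ≤ i), MulAction.stabilizer G v

/-- `(Γ, G)` is a locally `L` pair, for `L` the permutation group induced by `Sym(n)` on
ordered pairs of distinct elements of `{1,…,n}`. -/
def IsLocallyOPairs (n : ℕ) {V : Type*} (Γ : SimpleGraph V) (G : Subgroup (Equiv.Perm V)) :
    Prop :=
  PreservesAdj Γ G ∧ MulAction.IsPretransitive G V ∧
  ∀ x : V, ∃ (e : Γ.neighborSet x ≃ OPairs n)
      (φ : MulAction.stabilizer G x →* Equiv.Perm (Fin n)),
    Function.Surjective φ ∧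
    ∀ (g : MulAction.stabilizer G x) (v : Γ.neighborSet x),
      ((e.symm (φ g • e v) : Γ.neighborSet x) : V) = g • (v : V)

/-!
Let `X = G_x`, `T = G_{xy}`, `K = G_x^{[1]}` and `R = G_{xy}^{[1]} ≠ 1`, and let `t` interchange
`x` and `y`, so that `R = K ∩ K^t`.

By the Thompson–Wielandt argument, `R` is a `p`-group. If `R` contained all simple subnormal
subgroups of `K`, the group they generate would be normalised by `X` and by `t`; so some simple
subnormal `A ≤ K` is not contained in `K^t`. If `A` were perfect, `A^t` would centralise `K`, which
puts it inside `K`. Hence `A` is a `p`-group and `O_p(K) ≰ K^t`, and then `O^p(R)` is normalised by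
`T`, by `t` and by the `X`-conjugates of `O_p(K)^t`, so it is trivial.

For `n ≥ 5` the image of `O_p(K)^t` in the local action is a nontrivial normal `p`-subgroup of the
stabiliser of an ordered pair, which is `Sym(n - 2)`: so `(n, p)` is `(5, 3)` or `(6, 2)`. In the
first case the Thompson subgroup of `O_3(T)` yields an abelian `A ≤ O_3(T)`, `A ≰ K`, whose
centraliser has index at most `|A : A ∩ K| = 3` in `V = Z(O_3(K))`. Two conjugates of `A` generate
an element of order `5` modulo `K`; its centraliser in `V` has index at most `9` and congruent to
`1` modulo `5`, so it centralises `V`, contradicting `C_X(V) ≤ K`.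

For `n = 4` the stabiliser of an ordered pair has order `2`, so an element of odd order fixing a
ball of radius `1` fixes all neighbouring balls, hence every vertex.
-/

open Subgroup

section Conjugation

variable {G : Type*} [Group G] {A B C H K : Subgroup G} {g : G}

lemma mem_normalizer_iff_conj_smul_eq : g ∈ normalizer (H : Set G) ↔ MulAut.conj g • H = H :=
  mem_normalizer_iff_map_conj_eq

lemma conj_smul_normalizer (g : G) (H : Subgroup G) :
    MulAut.conj g • normalizer (H : Set G) = normalizer ↑(MulAut.conj g • H) :=
  map_equiv_normalizer_eq H (MulAut.conj g)

lemma card_conj_smul (g : G) (A : Subgroup G) :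
    Nat.card ↑(MulAut.conj g • A) = Nat.card A :=
  (Nat.card_congr (equivSMul (MulAut.conj g) A).toEquiv).symm

lemma le_normalizer_of_conj_smul_le (h : ∀ g ∈ H, MulAut.conj g • K ≤ K) : H ≤ normalizer K :=
  le_normalizer_iff.mpr fun g hg _ hk ↦ h g hg (smul_mem_pointwise_smul _ _ _ hk)

/-- A map on subgroups commuting with conjugation, such as `O_p`, the socle, or the Thompson
subgroup; its value at `H` is normal in every group normalising `H`. -/
def IsConjEquivariant (F : Subgroup G → Subgroup G) : Prop :=
  ∀ (g : G) (H : Subgroup G), MulAut.conj g • F H = F (MulAut.conj g • H)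

namespace IsConjEquivariant

variable {F : Subgroup G → Subgroup G}

lemma normalizer_le (hF : IsConjEquivariant F) (H : Subgroup G) :
    normalizer H ≤ normalizer (F H : Set G) := fun g hg ↦ by
  rw [mem_normalizer_iff_conj_smul_eq] at hg ⊢
  rw [hF, hg]

lemma of_le (h : ∀ (g : G) (H : Subgroup G), MulAut.conj g • F H ≤ F (MulAut.conj g • H)) :
    IsConjEquivariant F := fun g H ↦ by
  refine (h g H).antisymm ?_
  rw [subset_pointwise_smul_iff, ← map_inv]
  convert h g⁻¹ (MulAut.conj g • H) using 2
  rw [map_inv, inv_smul_smul]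

lemma sSup_setOf {Q : Subgroup G → Subgroup G → Prop}
    (hQ : ∀ (g : G) (A H : Subgroup G), Q A H → Q (MulAut.conj g • A) (MulAut.conj g • H)) :
    IsConjEquivariant fun H ↦ sSup {A | Q A H} := by
  refine of_le fun g H ↦ ?_
  rw [pointwise_smul_subset_iff]
  refine sSup_le fun A hA ↦ ?_
  rw [← pointwise_smul_subset_iff]
  exact le_sSup (hQ g A H hA)

end IsConjEquivariant

lemma isConjEquivariant_centralizer :
    IsConjEquivariant fun H : Subgroup G ↦ centralizer (H : Set G) :=
  .of_le fun g H ↦ map_centralizer_le_centralizer_image (H : Set G) (MulAut.conj g).toMonoidHom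

/-- `A` is a normal subgroup of `B`, both being subgroups of `G`. -/
def IsNormalIn (A B : Subgroup G) : Prop := A ≤ B ∧ B ≤ normalizer (A : Set G)

/-- `A` is a subnormal subgroup of `B`, both being subgroups of `G`. -/
def IsSubnormalIn : Subgroup G → Subgroup G → Prop := Relation.ReflTransGen IsNormalIn

namespace IsNormalIn

lemma refl (H : Subgroup G) : IsNormalIn H H := ⟨le_rfl, le_normalizer⟩

lemma conj_smul (h : IsNormalIn A B) (g : G) :
    IsNormalIn (MulAut.conj g • A) (MulAut.conj g • B) :=
  ⟨pointwise_smul_le_pointwise_smul_iff.mpr h.1, by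
    rw [← conj_smul_normalizer]; exact pointwise_smul_le_pointwise_smul_iff.mpr h.2⟩

lemma inf_right (h : IsNormalIn A B) (C : Subgroup G) : IsNormalIn (A ⊓ C) (B ⊓ C) :=
  ⟨inf_le_inf_right C h.1,
    (inf_le_inf h.2 le_normalizer).trans inf_normalizer_le_normalizer_inf⟩

lemma inf (h : IsNormalIn A C) (h' : IsNormalIn B C) : IsNormalIn (A ⊓ B) C :=
  ⟨inf_le_left.trans h.1, (le_inf h.2 h'.2).trans inf_normalizer_le_normalizer_inf⟩

lemma of_isConjEquivariant {F : Subgroup G → Subgroup G} (h : IsNormalIn A B)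
    (hF : IsConjEquivariant F) (hle : F A ≤ A) : IsNormalIn (F A) B :=
  ⟨hle.trans h.1, h.2.trans (hF.normalizer_le A)⟩

lemma map {G' : Type*} [Group G'] (h : IsNormalIn A B) (f : G →* G') :
    IsNormalIn (A.map f) (B.map f) :=
  ⟨map_mono h.1, (map_mono h.2).trans (le_normalizer_map f)⟩

lemma comap {G' : Type*} [Group G'] (h : IsNormalIn A B) (f : G' →* G) :
    IsNormalIn (A.comap f) (B.comap f) :=
  ⟨comap_mono h.1, (comap_mono h.2).trans (le_normalizer_comap f)⟩

lemma isSubnormalIn (h : IsNormalIn A B) : IsSubnormalIn A B := .single h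

end IsNormalIn

lemma commutator_eq_bot_of_commutator_commutator_eq_bot (hA : ⁅A, A⁆ = A)
    (h : ⁅⁅B, A⁆, A⁆ = ⊥) : ⁅B, A⁆ = ⊥ := by
  rw [commutator_comm, ← hA]
  exact commutator_commutator_eq_bot_of_rotate (commutator_comm A B ▸ h) h

namespace IsSubnormalIn

lemma le (h : IsSubnormalIn A B) : A ≤ B := by
  induction h with
  | refl => exact le_rfl
  | tail _ h ih => exact ih.trans h.1

lemma conj_smul (h : IsSubnormalIn A B) (g : G) :
    IsSubnormalIn (MulAut.conj g • A) (MulAut.conj g • B) :=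
  Relation.ReflTransGen.lift (MulAut.conj g • ·) (fun _ _ h ↦ h.conj_smul g) _ _ h

lemma of_le_of_le (h : IsSubnormalIn A B) (hAC : A ≤ C) (hCB : C ≤ B) : IsSubnormalIn A C := by
  have := Relation.ReflTransGen.lift (· ⊓ C) (fun _ _ h ↦ IsNormalIn.inf_right h C) _ _ h
  rwa [Function.onFun, inf_eq_left.mpr hAC, inf_eq_right.mpr hCB] at this

-- Climb the subnormal chain from `A` to `B`; each step is the three subgroups lemma.
lemma commutator_eq_bot {N : Subgroup G} (hAB : IsSubnormalIn A B) (hA : ⁅A, A⁆ = A)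
    (hN : IsNormalIn N B) (hAN : A ⊓ N = ⊥) : ⁅N, A⁆ = ⊥ := by
  suffices ∀ {C}, IsSubnormalIn C B → A ≤ C → ⁅C ⊓ N, A⁆ = ⊥ → ⁅N, A⁆ = ⊥ from
    this hAB le_rfl (by rw [hAN, commutator_bot_left])
  intro C hCB hAC hcomm
  induction hCB using Relation.ReflTransGen.head_induction_on with
  | refl => rwa [inf_eq_right.mpr hN.1] at hcomm
  | @head C D hCD _ ih =>
    have hle : ⁅D ⊓ N, A⁆ ≤ C ⊓ N := le_inf
      ((commutator_mono inf_le_left hAC).trans (le_normalizer_iff_commutator_le_right.mp hCD.2))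
      ((commutator_mono inf_le_right hAB.le).trans
        (le_normalizer_iff_commutator_le_left.mp hN.2))
    exact ih (hAC.trans hCD.1) <| commutator_eq_bot_of_commutator_commutator_eq_bot hA <|
      le_bot_iff.mp <| (commutator_mono hle le_rfl).trans hcomm.le

end IsSubnormalIn

lemma exists_isSimpleGroup_isSubnormalIn [Finite G] (hH : H ≠ ⊥) :
    ∃ A, IsSubnormalIn A H ∧ IsSimpleGroup A := by
  obtain ⟨A, ⟨hAH, hA⟩, hmin⟩ := exists_minimal_of_wellFoundedLT
    (fun A ↦ IsSubnormalIn A H ∧ A ≠ ⊥) ⟨H, .refl, hH⟩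
  refine ⟨A, hAH, Subgroup.isSimpleGroup_iff.mpr ⟨hA, fun N hNA hN ↦ ?_⟩⟩
  refine or_iff_not_imp_left.mpr fun hN' ↦ hNA.antisymm (hmin ⟨?_, hN'⟩ hNA)
  have hnormal : IsNormalIn N A := ⟨hNA, (normal_subgroupOf_iff_le_normalizer hNA).mp hN⟩
  exact hnormal.isSubnormalIn.trans hAH

variable {p : ℕ}

/-- The largest normal `p`-subgroup `O_p(H)` of `H`. -/
def pCore (p : ℕ) (H : Subgroup G) : Subgroup G := sSup {A | IsNormalIn A H ∧ IsPGroup p A}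

lemma isConjEquivariant_pCore : IsConjEquivariant (pCore (G := G) p) :=
  .sSup_setOf fun g _ _ h ↦ ⟨h.1.conj_smul g, h.2.map _⟩

lemma le_pCore (h : IsNormalIn A H) (hA : IsPGroup p A) : A ≤ pCore p H := le_sSup ⟨h, hA⟩

lemma pCore_le (p : ℕ) (H : Subgroup G) : pCore p H ≤ H := sSup_le fun _ h ↦ h.1.1

lemma isNormalIn_pCore (h : IsNormalIn A B) (p : ℕ) : IsNormalIn (pCore p A) B :=
  h.of_isConjEquivariant isConjEquivariant_pCore (pCore_le p A)

lemma isPGroup_pCore [Finite G] : IsPGroup p (pCore p H) := by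
  have hsup : SupClosed {A | IsNormalIn A H ∧ IsPGroup p A} := fun A hA B hB ↦
    ⟨⟨sup_le hA.1.1 hB.1.1,
      (le_inf hA.1.2 hB.1.2).trans (normalizer_inf_normalizer_le_normalizer_sup A B)⟩,
      hA.2.to_sup_of_normal_right' hB.2 (hA.1.1.trans hB.1.2)⟩
  have hbot : (⊥ : Subgroup G) ∈ {A | IsNormalIn A H ∧ IsPGroup p A} :=
    ⟨⟨bot_le, le_normalizer_of_normal⟩, .of_bot⟩
  exact (hsup.sSup_mem (Set.toFinite _) hbot subset_rfl).2

lemma pCore_le_pCore [Finite G] (h : IsNormalIn A B) : pCore p A ≤ pCore p B :=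
  le_pCore (isNormalIn_pCore h p) isPGroup_pCore

lemma pCore_inf_eq [Finite G] (h : IsNormalIn A B) : pCore p B ⊓ A = pCore p A := by
  have hcore : IsNormalIn (pCore p B ⊓ A) A := by
    simpa only [inf_eq_right.mpr h.1] using
      (isNormalIn_pCore (IsNormalIn.refl B) p).inf_right A
  exact le_antisymm (le_pCore hcore (isPGroup_pCore.to_le inf_le_left))
    (le_inf (pCore_le_pCore h) (pCore_le p A))

lemma IsSubnormalIn.le_pCore [Finite G] (h : IsSubnormalIn A B) (hA : IsPGroup p A) :
    A ≤ pCore p B := by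
  induction h with
  | refl => exact _root_.le_pCore (.refl A) hA
  | tail _ h ih => exact ih.trans (pCore_le_pCore h)

/-- The subgroup `O^p(H)` generated by the subgroups of `H` of order prime to `p`. -/
def pResidual (p : ℕ) (H : Subgroup G) : Subgroup G :=
  sSup {A | A ≤ H ∧ (Nat.card A).Coprime p}

lemma isConjEquivariant_pResidual : IsConjEquivariant (pResidual (G := G) p) :=
  .sSup_setOf fun g A _ h ↦ ⟨pointwise_smul_le_pointwise_smul_iff.mpr h.1, by
    rw [card_conj_smul]; exact h.2⟩

lemma pResidual_le (p : ℕ) (H : Subgroup G) : pResidual p H ≤ H := sSup_le fun _ h ↦ h.1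

lemma isPGroup_of_forall_coprime_orderOf [Finite G] [Fact p.Prime]
    (h : ∀ g : G, (orderOf g).Coprime p → g = 1) : IsPGroup p G := fun g ↦ by
  obtain ⟨k, m, hm, hk⟩ := Nat.exists_eq_pow_mul_and_not_dvd (orderOf_pos g).ne' p
    (Fact.out : p.Prime).ne_one
  refine ⟨k, h _ ?_⟩
  rw [orderOf_pow, hk, Nat.gcd_eq_right (Dvd.intro _ rfl),
    Nat.mul_div_cancel_left _ (pow_pos (Fact.out : p.Prime).pos k)]
  exact ((Fact.out : p.Prime).coprime_iff_not_dvd.mpr hm).symm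

lemma isPGroup_of_pResidual_eq_bot [Finite G] [Fact p.Prime] (h : pResidual p H = ⊥) :
    IsPGroup p H := by
  refine isPGroup_of_forall_coprime_orderOf fun g hg ↦ ?_
  have hle : zpowers (g : G) ≤ pResidual p H :=
    le_sSup ⟨zpowers_le.mpr g.2, by rwa [Nat.card_zpowers, orderOf_coe]⟩
  rw [h] at hle
  exact Subtype.ext (mem_bot.mp (hle (mem_zpowers _)))

-- Modulo `Q` the conjugate equals the commutator `u * z * u⁻¹ * z⁻¹ ∈ P`, so its order is both a
-- power of `p` and prime to `p`.
lemma conj_mem_of_orderOf_coprime {P L Q : Subgroup G} (hP : IsPGroup p P)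
    (hPL : P ≤ normalizer (L : Set G)) (hLP : L ≤ normalizer (P : Set G)) (hQ : IsNormalIn Q L)
    {u z : G} (hu : u ∈ P) (hz : z ∈ Q) (hcop : (orderOf z).Coprime p) :
    u * z * u⁻¹ ∈ Q := by
  have := normal_subgroupOf_of_le_normalizer hQ.2
  let π := QuotientGroup.mk' (Q.subgroupOf L)
  have hzL : z ∈ L := hQ.1 hz
  let w : L := ⟨u * z * u⁻¹, (mem_normalizer_iff.mp (hPL hu) z).mp hzL⟩
  have hπz : π ⟨z, hzL⟩ = 1 := (QuotientGroup.eq_one_iff _).mpr hz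
  let c : L := w * ⟨z, hzL⟩⁻¹
  have hπ : π w = π c := by simp [c, hπz]
  have hcP : (c : G) ∈ P := by
    have := mul_mem hu ((mem_normalizer_iff.mp (hLP hzL) u⁻¹).mp (inv_mem hu))
    simpa [c, w, mul_assoc] using this
  obtain ⟨k, hk⟩ := (isPGroup_iff_orderOf_dvd_pow.mp hP) ⟨c, hcP⟩
  have hdvd₁ : orderOf (π w) ∣ orderOf z := by
    refine (orderOf_map_dvd π w).trans (dvd_of_eq ?_)
    rw [← orderOf_coe]
    exact MulEquiv.orderOf_eq (MulAut.conj u) z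
  have hdvd₂ : orderOf (π w) ∣ p ^ k := by
    rw [hπ]
    refine (orderOf_map_dvd π c).trans ?_
    rwa [orderOf_mk, orderOf_coe] at hk
  have hone : π w = 1 :=
    orderOf_eq_one_iff.mp (Nat.eq_one_of_dvd_coprimes (hcop.pow_right k) hdvd₁ hdvd₂)
  exact (QuotientGroup.eq_one_iff w).mp hone

lemma le_normalizer_pResidual {P L Q : Subgroup G} (hP : IsPGroup p P)
    (hPL : P ≤ normalizer (L : Set G)) (hLP : L ≤ normalizer (P : Set G)) (hQ : IsNormalIn Q L) :
    P ≤ normalizer (pResidual p Q : Set G) := by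
  refine le_normalizer_of_conj_smul_le fun u hu ↦ ?_
  rw [pointwise_smul_subset_iff]
  refine sSup_le fun A ⟨hAQ, hA⟩ ↦ ?_
  rw [← pointwise_smul_subset_iff]
  refine le_sSup ⟨?_, by rwa [card_conj_smul]⟩
  rintro _ ⟨z, hz, rfl⟩
  exact conj_mem_of_orderOf_coprime hP hPL hLP hQ hu (hAQ hz)
    (hA.coprime_dvd_left (orderOf_dvd_natCard A hz))

end Conjugation

section SimpleSubnormal

variable {G : Type*} [Group G] {A H K N X P : Subgroup G}

lemma IsNormalIn.eq_bot_or_eq [hA : IsSimpleGroup A] (h : IsNormalIn N A) : N = ⊥ ∨ N = A :=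
  (Subgroup.isSimpleGroup_iff.mp hA).2 N h.1 (normal_subgroupOf_of_le_normalizer h.2)

open scoped IsMulCommutative in
lemma commutator_eq_self_or_exists_isPGroup [IsSimpleGroup A] [Finite A] :
    ⁅A, A⁆ = A ∨ ∃ p, p.Prime ∧ IsPGroup p A := by
  have hnormal : IsNormalIn ⁅A, A⁆ A :=
    ⟨commutator_le_self A, normalizer_commutator_ge_left A A⟩
  refine hnormal.eq_bot_or_eq.symm.imp_right fun hA ↦ ?_
  have : IsMulCommutative A :=
    le_centralizer_iff_isMulCommutative.mp (commutator_eq_bot_iff_le_centralizer.mp hA)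
  exact ⟨_, IsSimpleGroup.prime_card, .card⟩

lemma isNormalIn_iSup_conj_smul (h : P ≤ X) :
    IsNormalIn (⨆ x : X, MulAut.conj (x : G) • P) X := by
  refine ⟨iSup_le fun x ↦ ?_, le_normalizer_of_conj_smul_le fun g hg ↦ ?_⟩
  · calc MulAut.conj (x : G) • P
      _ ≤ MulAut.conj (x : G) • X := pointwise_smul_le_pointwise_smul_iff.mpr h
      _ = X := conj_smul_eq_self_of_mem x.2
  · rw [pointwise_smul_subset_iff, iSup_le_iff]
    intro x
    rw [← pointwise_smul_subset_iff, smul_smul, ← map_mul]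
    exact le_iSup_of_le ⟨g * x, mul_mem hg x.2⟩ le_rfl

/-- The subgroup generated by the simple subnormal subgroups of `H`. -/
def subnormalSocle (H : Subgroup G) : Subgroup G :=
  sSup {A | IsSubnormalIn A H ∧ IsSimpleGroup A}

lemma isConjEquivariant_subnormalSocle : IsConjEquivariant (subnormalSocle (G := G)) :=
  .sSup_setOf fun g A _ ⟨h, _⟩ ↦ ⟨h.conj_smul g,
    (equivSMul (MulAut.conj g) A).symm.isSimpleGroup⟩

lemma subnormalSocle_le (H : Subgroup G) : subnormalSocle H ≤ H := sSup_le fun _ h ↦ h.1.le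

lemma subnormalSocle_ne_bot [Finite G] (hH : H ≠ ⊥) : subnormalSocle H ≠ ⊥ := fun h ↦ by
  obtain ⟨A, hAH, hA⟩ := exists_isSimpleGroup_isSubnormalIn hH
  have hle : A ≤ subnormalSocle H := le_sSup ⟨hAH, hA⟩
  exact (nontrivial_iff_ne_bot A).mp hA.toNontrivial (le_bot_iff.mp (h ▸ hle))

lemma subnormalSocle_eq_of_isNormalIn (h : IsNormalIn H K)
    (hle : ∀ A, IsSubnormalIn A K → IsSimpleGroup A → A ≤ H) :
    subnormalSocle H = subnormalSocle K := by
  refine le_antisymm (sSup_le_sSup fun A hA ↦ ⟨hA.1.trans h.isSubnormalIn, hA.2⟩)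
    (sSup_le_sSup fun A hA ↦ ⟨hA.1.of_le_of_le (hle A hA.1 hA.2) h.1, hA.2⟩)

end SimpleSubnormal

section EdgeAmalgam

variable {G : Type*} [Group G] {X T K M S H : Subgroup G} {t : G} {p : ℕ}

/-- The stabilisers `X = G_x`, `T = G_{xy}` and the kernel `K = G_x^{[1]}` of a connected
`G`-arc-transitive graph with an edge `{x, y}` flipped by `t`, whose local action is
quasiprimitive. As `X` and `t` generate `G`, faithfulness says that no nontrivial subgroup of `T`
is normalised by both. -/
structure EdgeAmalgam (X T K : Subgroup G) (t : G) : Prop where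
  arc_le : T ≤ X
  kernel_le : K ≤ T
  le_normalizer : X ≤ normalizer (K : Set G)
  conj_arc : MulAut.conj t • T = T
  conj_conj_kernel : MulAut.conj t • MulAut.conj t • K = K
  faithful : ∀ H ≤ T, X ≤ normalizer (H : Set G) → MulAut.conj t • H = H → H = ⊥
  quasiprimitive : ∀ M, IsNormalIn M X → ¬M ≤ K → X ≤ M ⊔ T

/-- The kernel `G_{xy}^{[1]}` of an edge, from the kernel `K = G_x^{[1]}` and an edge flip `t`. -/
def edgeKernel (K : Subgroup G) (t : G) : Subgroup G := K ⊓ MulAut.conj t • K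

lemma edgeKernel_le : edgeKernel K t ≤ K := inf_le_left

namespace EdgeAmalgam

lemma isNormalIn_kernel (h : EdgeAmalgam X T K t) : IsNormalIn K T :=
  ⟨h.kernel_le, h.arc_le.trans h.le_normalizer⟩

lemma isNormalIn_conj_kernel (h : EdgeAmalgam X T K t) : IsNormalIn (MulAut.conj t • K) T := by
  simpa only [h.conj_arc] using h.isNormalIn_kernel.conj_smul t

lemma conj_le_kernel_iff (h : EdgeAmalgam X T K t) :
    MulAut.conj t • H ≤ K ↔ H ≤ MulAut.conj t • K := by
  rw [← pointwise_smul_le_pointwise_smul_iff (a := MulAut.conj t) (T := MulAut.conj t • K),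
    h.conj_conj_kernel]

lemma isNormalIn_conj_pCore (h : EdgeAmalgam X T K t) (p : ℕ) :
    IsNormalIn (MulAut.conj t • pCore p K) T := by
  rw [isConjEquivariant_pCore]
  exact isNormalIn_pCore h.isNormalIn_conj_kernel p

lemma isNormalIn_edgeKernel (h : EdgeAmalgam X T K t) : IsNormalIn (edgeKernel K t) T :=
  h.isNormalIn_kernel.inf h.isNormalIn_conj_kernel

lemma conj_edgeKernel (h : EdgeAmalgam X T K t) :
    MulAut.conj t • edgeKernel K t = edgeKernel K t := by
  rw [edgeKernel, smul_inf, h.conj_conj_kernel, inf_comm]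

lemma le_kernel_of_le_normalizer (h : EdgeAmalgam X T K t) (hM : IsNormalIn M X)
    (hST : IsNormalIn S T) (ht : MulAut.conj t • S = S) (hS : S ≠ ⊥)
    (hMS : M ≤ normalizer (S : Set G)) : M ≤ K := by
  by_contra hMK
  exact hS (h.faithful S hST.1 ((h.quasiprimitive M hM hMK).trans (sup_le hMS hST.2)) ht)

lemma centralizer_inf_le_kernel (h : EdgeAmalgam X T K t) (hHX : X ≤ normalizer (H : Set G))
    (hST : IsNormalIn S T) (ht : MulAut.conj t • S = S) (hS : S ≠ ⊥) (hSH : S ≤ H) :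
    centralizer (H : Set G) ⊓ X ≤ K := by
  refine h.le_kernel_of_le_normalizer ⟨inf_le_right, ?_⟩ hST ht hS ?_
  · exact (le_inf (hHX.trans (isConjEquivariant_centralizer.normalizer_le H))
      Subgroup.le_normalizer).trans inf_normalizer_le_normalizer_inf
  · exact inf_le_left.trans ((centralizer_le hSH).trans (centralizer_le_normalizer _))

lemma exists_isSimpleGroup_not_le_conj_kernel [Finite G] (h : EdgeAmalgam X T K t)
    (hR : edgeKernel K t ≠ ⊥) :
    ∃ A, IsSubnormalIn A K ∧ IsSimpleGroup A ∧ ¬A ≤ MulAut.conj t • K := by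
  by_contra! hle
  have hRK : IsNormalIn (edgeKernel K t) K :=
    ⟨edgeKernel_le, h.kernel_le.trans h.isNormalIn_edgeKernel.2⟩
  have hsocle : subnormalSocle (edgeKernel K t) = subnormalSocle K :=
    subnormalSocle_eq_of_isNormalIn hRK fun A hA hA' ↦ le_inf hA.le (hle A hA hA')
  refine subnormalSocle_ne_bot hR (h.faithful _ ?_ ?_ ?_)
  · exact (subnormalSocle_le _).trans h.isNormalIn_edgeKernel.1
  · rw [hsocle]
    exact h.le_normalizer.trans (isConjEquivariant_subnormalSocle.normalizer_le K)
  · rw [isConjEquivariant_subnormalSocle, h.conj_edgeKernel]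

lemma exists_pCore_not_le_conj_kernel [Finite G] (h : EdgeAmalgam X T K t)
    (hR : edgeKernel K t ≠ ⊥) : ∃ p, p.Prime ∧ ¬pCore p K ≤ MulAut.conj t • K := by
  obtain ⟨A, hAK, hA, hAt⟩ := h.exists_isSimpleGroup_not_le_conj_kernel hR
  rcases commutator_eq_self_or_exists_isPGroup (A := A) with hperfect | ⟨p, hp, hAp⟩
  · set B := MulAut.conj t • A
    have : IsSimpleGroup B := (equivSMul (MulAut.conj t) A).symm.isSimpleGroup
    have hBT : IsSubnormalIn B T := (hAK.conj_smul t).trans h.isNormalIn_conj_kernel.isSubnormalIn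
    have hBK : ¬B ≤ K := h.conj_le_kernel_iff.not.mpr hAt
    have hBperfect : ⁅B, B⁆ = B := calc
      _ = MulAut.conj t • ⁅A, A⁆ := (map_commutator A A (MulAut.conj t).toMonoidHom).symm
      _ = B := by rw [hperfect]
    have hdisj : B ⊓ K = ⊥ := by
      have hn : IsNormalIn (K ⊓ B) B := by
        simpa [inf_eq_right.mpr hBT.le] using h.isNormalIn_kernel.inf_right B
      rw [inf_comm]
      exact hn.eq_bot_or_eq.resolve_right fun he ↦ hBK (inf_eq_right.mp he)
    have hcomm : ⁅K, B⁆ = ⊥ := hBT.commutator_eq_bot hBperfect h.isNormalIn_kernel hdisj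
    rw [commutator_comm, commutator_eq_bot_iff_le_centralizer] at hcomm
    have hcent : centralizer (K : Set G) ⊓ X ≤ K := h.centralizer_inf_le_kernel h.le_normalizer
      h.isNormalIn_edgeKernel h.conj_edgeKernel hR edgeKernel_le
    exact absurd ((le_inf hcomm (hBT.le.trans h.arc_le)).trans hcent) hBK
  · exact ⟨p, hp, fun hle ↦ hAt ((hAK.le_pCore hAp).trans hle)⟩

lemma isPGroup_edgeKernel [Finite G] [Fact p.Prime] (h : EdgeAmalgam X T K t)
    (hp : ¬pCore p K ≤ MulAut.conj t • K) : IsPGroup p (edgeKernel K t) := by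
  set R := edgeKernel K t
  set P := MulAut.conj t • pCore p K
  have hPT : IsNormalIn P T := h.isNormalIn_conj_pCore p
  have hRT : IsNormalIn R T := h.isNormalIn_edgeKernel
  have hRK : IsNormalIn R K := ⟨edgeKernel_le, h.kernel_le.trans hRT.2⟩
  have hM : IsNormalIn (⨆ x : X, MulAut.conj (x : G) • P) X :=
    isNormalIn_iSup_conj_smul (hPT.1.trans h.arc_le)
  have hconj (x : X) : MulAut.conj (x : G) • P ≤ normalizer (pResidual p R : Set G) := by
    have hKx : MulAut.conj (x : G) • K = K :=
      mem_normalizer_iff_conj_smul_eq.mp (h.le_normalizer x.2)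
    refine le_normalizer_pResidual ((isPGroup_pCore.map _).map _) ?_ ?_ hRK
    · exact ((le_iSup (fun x : X ↦ MulAut.conj (x : G) • P) x).trans hM.1).trans h.le_normalizer
    · rw [← hKx, ← conj_smul_normalizer]
      exact pointwise_smul_le_pointwise_smul_iff.mpr (h.kernel_le.trans hPT.2)
  refine isPGroup_of_pResidual_eq_bot (by_contra fun hres ↦ h.conj_le_kernel_iff.not.mpr hp ?_)
  have hPM : P ≤ ⨆ x : X, MulAut.conj (x : G) • P := by
    simpa using le_iSup (fun x : X ↦ MulAut.conj (x : G) • P) 1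
  refine hPM.trans (h.le_kernel_of_le_normalizer hM ?_ ?_ hres (iSup_le hconj))
  · exact hRT.of_isConjEquivariant isConjEquivariant_pResidual (pResidual_le p R)
  · rw [isConjEquivariant_pResidual, h.conj_edgeKernel]

end EdgeAmalgam
end EdgeAmalgam

section Thompson

variable {G : Type*} [Group G] {A B H K V : Subgroup G} {p : ℕ}

/-- The centre `Z(H)` of `H`, as a subgroup of the ambient group. -/
def centerIn (H : Subgroup G) : Subgroup G := H ⊓ centralizer (H : Set G)

lemma isConjEquivariant_centerIn : IsConjEquivariant (centerIn (G := G)) := fun g H ↦ by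
  rw [centerIn, smul_inf, isConjEquivariant_centralizer g H, centerIn]

lemma centerIn_le (H : Subgroup G) : centerIn H ≤ H := inf_le_left

lemma centerIn_le_centralizer (H : Subgroup G) : centerIn H ≤ centralizer (H : Set G) :=
  inf_le_right

lemma centerIn_ne_bot [Finite G] [Fact p.Prime] (hH : IsPGroup p H) (hne : H ≠ ⊥) :
    centerIn H ≠ ⊥ := fun hbot ↦ by
  have := (nontrivial_iff_ne_bot H).mpr hne
  have := hH.center_nontrivial
  obtain ⟨z, hz⟩ := exists_ne (1 : center H)
  have hmem : (z : G) ∈ centerIn H := mem_inf.mpr ⟨z.1.2, mem_centralizer_iff.mpr fun b hb ↦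
    congrArg Subtype.val (mem_center_iff.mp z.2 ⟨b, hb⟩)⟩
  rw [hbot, mem_bot] at hmem
  exact hz (Subtype.ext (Subtype.ext hmem))

instance isMulCommutative_centerIn : IsMulCommutative (centerIn H) :=
  le_centralizer_iff_isMulCommutative.mp <|
    (centerIn_le_centralizer H).trans (centralizer_le (centerIn_le H))

lemma isMulCommutative_sup [IsMulCommutative A] [IsMulCommutative B]
    (h : A ≤ centralizer (B : Set G)) : IsMulCommutative ↑(A ⊔ B) := by
  rw [← le_centralizer_iff_isMulCommutative, sup_le_iff]
  constructor <;> rw [le_centralizer_iff, sup_le_iff]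
  · exact ⟨le_centralizer A, le_centralizer_iff.mp h⟩
  · exact ⟨h, le_centralizer B⟩

/-- `A` is an abelian subgroup of `H` of largest order. -/
structure IsLargestAbelianIn (A H : Subgroup G) : Prop where
  le : A ≤ H
  isMulCommutative : IsMulCommutative A
  card_le : ∀ B ≤ H, IsMulCommutative B → Nat.card B ≤ Nat.card A

/-- The Thompson subgroup `J(H)`, generated by the abelian subgroups of `H` of largest order. -/
def thompsonSubgroup (H : Subgroup G) : Subgroup G := sSup {A | IsLargestAbelianIn A H}

lemma isMulCommutative_conj_smul (g : G) (h : IsMulCommutative A) :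
    IsMulCommutative ↑(MulAut.conj g • A) := by
  refine le_centralizer_iff_isMulCommutative.mp ?_
  rw [← show _ = centralizer _ from isConjEquivariant_centralizer g A]
  exact pointwise_smul_le_pointwise_smul_iff.mpr (le_centralizer A)

lemma isConjEquivariant_thompsonSubgroup : IsConjEquivariant (thompsonSubgroup (G := G)) :=
  .sSup_setOf fun g A H h ↦ by
    refine ⟨pointwise_smul_le_pointwise_smul_iff.mpr h.le,
      isMulCommutative_conj_smul g h.isMulCommutative, fun B hB hB' ↦ ?_⟩
    rw [card_conj_smul, ← card_conj_smul g⁻¹ B]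
    refine h.card_le _ ?_ (isMulCommutative_conj_smul _ hB')
    rwa [map_inv, ← subset_pointwise_smul_iff]

lemma exists_isLargestAbelianIn [Finite G] (H : Subgroup G) : ∃ A, IsLargestAbelianIn A H := by
  obtain ⟨A, hA, hmax⟩ := Set.exists_max_image {A : Subgroup G | A ≤ H ∧ IsMulCommutative A}
    (fun A ↦ Nat.card A) (Set.toFinite _) ⟨⊥, bot_le, inferInstance⟩
  exact ⟨A, hA.1, hA.2, fun B hB hB' ↦ hmax B ⟨hB, hB'⟩⟩

lemma thompsonSubgroup_le (H : Subgroup G) : thompsonSubgroup H ≤ H := sSup_le fun _ h ↦ h.le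

lemma thompsonSubgroup_ne_bot [Finite G] (hH : H ≠ ⊥) : thompsonSubgroup H ≠ ⊥ := by
  obtain ⟨A, hA⟩ := exists_isLargestAbelianIn H
  obtain ⟨⟨a, haH⟩, ha⟩ := ne_bot_iff_exists_ne_one.mp hH
  refine ne_bot_of_le_ne_bot (fun hbot ↦ ha (Subtype.ext ?_)) (le_sSup hA)
  have hcard := hA.card_le (zpowers a) (zpowers_le.mpr haH) inferInstance
  rw [hbot, card_bot] at hcard
  exact zpowers_eq_bot.mp ((card_le_one_iff_eq_bot _).mp hcard)

lemma thompsonSubgroup_eq_of_le [Finite G] (hHK : H ≤ K)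
    (h : ∀ A, IsLargestAbelianIn A K → A ≤ H) : thompsonSubgroup H = thompsonSubgroup K := by
  obtain ⟨B, hB⟩ := exists_isLargestAbelianIn K
  refine congrArg sSup (Set.ext fun A ↦ ?_)
  exact ⟨fun hA ↦ ⟨hA.le.trans hHK, hA.isMulCommutative, fun C hC hC' ↦
      (hB.card_le C hC hC').trans (hA.card_le B (h B hB) hB.isMulCommutative)⟩,
    fun hA ↦ ⟨h A hA, hA.isMulCommutative, fun C hC ↦ hA.card_le C (hC.trans hHK)⟩⟩

-- `V` commutes with `A ⊓ K`, so `V ⊔ A ⊓ K` is abelian and no larger than `A`.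
lemma IsLargestAbelianIn.relIndex_centralizer_le [Finite G] [IsMulCommutative V]
    (hA : IsLargestAbelianIn A H) (hVH : V ≤ H)
    (hV : V ≤ centralizer ((A ⊓ K : Subgroup G) : Set G)) :
    (centralizer (A : Set G)).relIndex V ≤ K.relIndex A := by
  have := hA.isMulCommutative
  have : IsMulCommutative ↑(A ⊓ K) := le_centralizer_iff_isMulCommutative.mp <|
    inf_le_left.trans ((le_centralizer A).trans (centralizer_le inf_le_left))
  have hcard : Nat.card ↑(V ⊔ A ⊓ K) ≤ Nat.card A :=
    hA.card_le _ (sup_le hVH (inf_le_left.trans hA.le)) (isMulCommutative_sup hV)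
  have hmul {B : Subgroup G} (hB : A ⊓ K ≤ B) :
      Nat.card ↑(A ⊓ K) * (A ⊓ K).relIndex B = Nat.card B := by
    simpa only [relIndex_bot_left] using relIndex_mul_relIndex ⊥ (A ⊓ K) B bot_le hB
  rw [← hmul le_sup_right, ← hmul inf_le_left] at hcard
  calc (centralizer (A : Set G)).relIndex V
    _ ≤ (A ⊓ K).relIndex V :=
      relIndex_le_of_le_left (inf_le_left.trans (le_centralizer A)) index_ne_zero_of_finite
    _ ≤ (A ⊓ K).relIndex (V ⊔ A ⊓ K) :=
      relIndex_le_of_le_right le_sup_left index_ne_zero_of_finite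
    _ ≤ (A ⊓ K).relIndex A := Nat.le_of_mul_le_mul_left hcard Nat.card_pos
    _ = K.relIndex A := inf_relIndex_left A K

end Thompson

namespace EdgeAmalgam

variable {G : Type*} [Group G] {X T K : Subgroup G} {t : G} {p : ℕ}

lemma edgeKernel_le_pCore_kernel (h : EdgeAmalgam X T K t) (hRp : IsPGroup p (edgeKernel K t)) :
    edgeKernel K t ≤ pCore p K :=
  le_pCore ⟨edgeKernel_le, h.kernel_le.trans h.isNormalIn_edgeKernel.2⟩ hRp

lemma conj_pCore_arc (h : EdgeAmalgam X T K t) : MulAut.conj t • pCore p T = pCore p T := by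
  rw [isConjEquivariant_pCore, h.conj_arc]

lemma le_normalizer_pCore_kernel (h : EdgeAmalgam X T K t) :
    X ≤ normalizer (pCore p K : Set G) :=
  h.le_normalizer.trans (isConjEquivariant_pCore.normalizer_le K)

lemma le_normalizer_centerIn_pCore_kernel (h : EdgeAmalgam X T K t) :
    X ≤ normalizer (centerIn (pCore p K) : Set G) :=
  h.le_normalizer_pCore_kernel.trans (isConjEquivariant_centerIn.normalizer_le _)

variable [Finite G]

lemma pCore_arc_ne_bot (h : EdgeAmalgam X T K t) (hRp : IsPGroup p (edgeKernel K t))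
    (hR : edgeKernel K t ≠ ⊥) : pCore p T ≠ ⊥ :=
  ne_bot_of_le_ne_bot hR <|
    (h.edgeKernel_le_pCore_kernel hRp).trans (pCore_le_pCore h.isNormalIn_kernel)

lemma centerIn_pCore_arc_le (h : EdgeAmalgam X T K t) (hRp : IsPGroup p (edgeKernel K t))
    (hR : edgeKernel K t ≠ ⊥) : centerIn (pCore p T) ≤ centerIn (pCore p K) := by
  have hPT : pCore p K ≤ pCore p T := pCore_le_pCore h.isNormalIn_kernel
  have hcent : centralizer (pCore p K : Set G) ⊓ X ≤ K :=
    h.centralizer_inf_le_kernel h.le_normalizer_pCore_kernel h.isNormalIn_edgeKernel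
      h.conj_edgeKernel hR (h.edgeKernel_le_pCore_kernel hRp)
  have hZ : centerIn (pCore p T) ≤ centralizer (pCore p K : Set G) :=
    (centerIn_le_centralizer _).trans (centralizer_le hPT)
  have hZT : centerIn (pCore p T) ≤ T := (centerIn_le _).trans (pCore_le p T)
  refine le_inf ?_ hZ
  rw [← pCore_inf_eq h.isNormalIn_kernel]
  exact le_inf (centerIn_le _) ((le_inf hZ (hZT.trans h.arc_le)).trans hcent)

lemma exists_isLargestAbelianIn_not_le_kernel (h : EdgeAmalgam X T K t)
    (hRp : IsPGroup p (edgeKernel K t)) (hR : edgeKernel K t ≠ ⊥) :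
    ∃ A, IsLargestAbelianIn A (pCore p T) ∧ ¬A ≤ K := by
  by_contra! hle
  have hJ : thompsonSubgroup (pCore p K) = thompsonSubgroup (pCore p T) :=
    thompsonSubgroup_eq_of_le (pCore_le_pCore h.isNormalIn_kernel) fun A hA ↦ by
      rw [← pCore_inf_eq h.isNormalIn_kernel]
      exact le_inf hA.le (hle A hA)
  refine thompsonSubgroup_ne_bot (h.pCore_arc_ne_bot hRp hR) (h.faithful _ ?_ ?_ ?_)
  · exact (thompsonSubgroup_le _).trans (pCore_le p T)
  · rw [← hJ]
    exact h.le_normalizer_pCore_kernel.trans (isConjEquivariant_thompsonSubgroup.normalizer_le _)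
  · rw [isConjEquivariant_thompsonSubgroup, h.conj_pCore_arc]

lemma exists_relIndex_centralizer_le (h : EdgeAmalgam X T K t)
    (hRp : IsPGroup p (edgeKernel K t)) (hR : edgeKernel K t ≠ ⊥) :
    ∃ A ≤ pCore p T, ¬A ≤ K ∧
      (centralizer (A : Set G)).relIndex (centerIn (pCore p K)) ≤ K.relIndex A := by
  obtain ⟨A, hA, hAK⟩ := h.exists_isLargestAbelianIn_not_le_kernel hRp hR
  have hAP : A ⊓ K ≤ pCore p K := by
    rw [← pCore_inf_eq h.isNormalIn_kernel]
    exact inf_le_inf_right K hA.le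
  exact ⟨A, hA.le, hAK, hA.relIndex_centralizer_le
    ((centerIn_le _).trans (pCore_le_pCore h.isNormalIn_kernel))
    ((centerIn_le_centralizer _).trans (centralizer_le hAP))⟩

lemma centralizer_centerIn_pCore_inf_le_kernel [Fact p.Prime]
    (h : EdgeAmalgam X T K t) (hRp : IsPGroup p (edgeKernel K t)) (hR : edgeKernel K t ≠ ⊥) :
    centralizer (centerIn (pCore p K) : Set G) ⊓ X ≤ K := by
  refine h.centralizer_inf_le_kernel h.le_normalizer_centerIn_pCore_kernel
    (S := centerIn (pCore p T)) ?_ ?_ ?_ (h.centerIn_pCore_arc_le hRp hR)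
  · exact (isNormalIn_pCore (.refl T) p).of_isConjEquivariant isConjEquivariant_centerIn
      (centerIn_le _)
  · rw [isConjEquivariant_centerIn, h.conj_pCore_arc]
  · exact centerIn_ne_bot isPGroup_pCore (h.pCore_arc_ne_bot hRp hR)

end EdgeAmalgam

section CoprimeAction

variable {G : Type*} [Group G] {V : Subgroup G} {d : G} {q k : ℕ}

lemma relIndex_centralizer_singleton_modEq_one [Finite V] [Fact q.Prime]
    (hdV : d ∈ normalizer (V : Set G)) (hd : d ^ q ^ k = 1) (hcop : (Nat.card V).Coprime q) :
    (centralizer {d}).relIndex V ≡ 1 [MOD q] := by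
  let α : MulAut V := V.normalizerMonoidHom ⟨d, hdV⟩
  have hα : IsPGroup q (zpowers α) := .of_card_dvd_pow <| by
    rw [Nat.card_zpowers]
    refine orderOf_dvd_of_pow_eq_one (n := q ^ k) ?_
    rw [← map_pow, show (⟨d, hdV⟩ : normalizer (V : Set G)) ^ q ^ k = 1 from Subtype.ext hd,
      map_one]
  have hfixed : fixedPoints (zpowers α) V = ((centralizer {d}).subgroupOf V : Set V) := by
    ext v
    have hv : v ∈ fixedPoints (zpowers α) V ↔ α • v = v :=
      Subtype.forall.trans <| (forall_mem_zpowers (p := fun β ↦ β • v = v)).trans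
        mem_fixedBy_zpowers_iff_mem_fixedBy
    have hv' : α • v = v ↔ d * v * d⁻¹ = v := Subtype.ext_iff
    rw [hv, hv', mul_inv_eq_iff_eq_mul, SetLike.mem_coe, mem_subgroupOf,
      mem_centralizer_singleton_iff, eq_comm]
  have hmod : Nat.card V ≡ Nat.card ((centralizer {d}).subgroupOf V) [MOD q] := by
    have := hα.card_modEq_card_fixedPoints V
    rwa [hfixed] at this
  rw [← card_mul_index ((centralizer {d}).subgroupOf V)] at hmod hcop
  refine Nat.ModEq.cancel_left_of_coprime (c := Nat.card ((centralizer {d}).subgroupOf V)) ?_ ?_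
  · exact hcop.coprime_mul_right.symm
  · rwa [mul_one]

end CoprimeAction

section PermutationGroups

variable {α : Type*} {p n : ℕ}

lemma card_lt_five_of_normal_isPGroup [Finite α] [Fact p.Prime]
    {N : Subgroup (Equiv.Perm α)} [N.Normal] (hN : N ≠ ⊥) (hp : IsPGroup p N) : Nat.card α < 5 := by
  classical
  have := Fintype.ofFinite α
  by_contra! hα
  have hle := Equiv.Perm.alternatingGroup_le_of_normal hα ((nontrivial_iff_ne_bot N).mpr hN)
  have : Nontrivial (alternatingGroup α) := alternatingGroup.nontrivial_of_three_le_card (by omega)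
  have := (hp.to_le hle).center_nontrivial
  exact (nontrivial_iff_ne_bot _).mp this (alternatingGroup.center_eq_bot (by omega))

lemma dvd_card_of_normal_isPGroup [Finite α] [Nontrivial α] [Fact p.Prime]
    {N : Subgroup (Equiv.Perm α)} [N.Normal] (hN : N ≠ ⊥) (hp : IsPGroup p N) : p ∣ Nat.card α := by
  have : IsPretransitive N α := IsQuasiPreprimitive.isPretransitive_of_normal fun h ↦ hN <|
    (eq_bot_iff_forall N).mpr fun σ hσ ↦ Equiv.ext fun a ↦ Set.eq_univ_iff_forall.mp h a ⟨σ, hσ⟩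
  obtain ⟨k, hk⟩ := hp.card_orbit (Classical.arbitrary α)
  rw [orbit_eq_univ, Nat.card_univ] at hk
  rw [hk]
  refine dvd_pow_self p fun hk0 ↦ ?_
  rw [hk0, pow_zero] at hk
  exact Finite.one_lt_card.ne' hk

lemma card_eq_and_eq_of_normal_isPGroup [Finite α] [hpp : Fact p.Prime]
    {N : Subgroup (Equiv.Perm α)} [N.Normal] (hα : 3 ≤ Nat.card α) (hN : N ≠ ⊥)
    (hp : IsPGroup p N) : (Nat.card α = 3 ∧ p = 3) ∨ (Nat.card α = 4 ∧ p = 2) := by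
  have : Nontrivial α := Finite.one_lt_card_iff_nontrivial.mp (by omega)
  have hlt := card_lt_five_of_normal_isPGroup hN hp
  have hdvd := dvd_card_of_normal_isPGroup hN hp
  obtain h | h : Nat.card α = 3 ∨ Nat.card α = 2 ^ 2 := by omega
  · exact .inl ⟨h, (Nat.prime_dvd_prime_iff_eq hpp.out Nat.prime_three).mp (h ▸ hdvd)⟩
  · exact .inr ⟨h, (Nat.prime_dvd_prime_iff_eq hpp.out Nat.prime_two).mp
      (hpp.out.dvd_of_dvd_pow (h ▸ hdvd))⟩

lemma card_eq_and_eq_of_isPGroup_le_range_ofSubtype [Finite α] [Fact p.Prime]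
    {P : α → Prop} [DecidablePred P] {N : Subgroup (Equiv.Perm α)}
    (hN : IsNormalIn N (Equiv.Perm.ofSubtype (p := P)).range)
    (hP : 3 ≤ Nat.card (Subtype P)) (hne : N ≠ ⊥) (hp : IsPGroup p N) :
    (Nat.card (Subtype P) = 3 ∧ p = 3) ∨ (Nat.card (Subtype P) = 4 ∧ p = 2) := by
  have hmap := map_comap_eq_self hN.1
  have : (N.comap (Equiv.Perm.ofSubtype (p := P))).Normal := by
    rw [← normalizer_eq_top_iff, ← comap_normalizer_eq_of_le_range hN.1, eq_top_iff]
    exact fun σ _ ↦ hN.2 ⟨σ, rfl⟩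
  refine card_eq_and_eq_of_normal_isPGroup hP (fun hbot ↦ hne ?_)
    (hp.comap_of_injective _ Equiv.Perm.ofSubtype_injective)
  rw [← hmap, hbot, Subgroup.map_bot]

lemma opairs_smul_eq_iff {σ : Equiv.Perm (Fin n)} {P Q : OPairs n} :
    σ • P = Q ↔ σ P.1.1 = Q.1.1 ∧ σ P.1.2 = Q.1.2 :=
  Subtype.ext_iff.trans Prod.ext_iff

lemma stabilizer_opairs (P : OPairs n) : stabilizer (Equiv.Perm (Fin n)) P =
    (Equiv.Perm.ofSubtype (p := fun c ↦ c ≠ P.1.1 ∧ c ≠ P.1.2)).range := by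
  ext σ
  rw [mem_stabilizer_iff, opairs_smul_eq_iff, Equiv.Perm.mem_range_ofSubtype_iff]
  refine ⟨fun h c hc ↦ ⟨?_, ?_⟩, fun h ↦ ⟨?_, ?_⟩⟩
  · rintro rfl
    exact Equiv.Perm.mem_support.mp hc h.1
  · rintro rfl
    exact Equiv.Perm.mem_support.mp hc h.2
  · exact Equiv.Perm.notMem_support.mp fun hc ↦ (h hc).1 rfl
  · exact Equiv.Perm.notMem_support.mp fun hc ↦ (h hc).2 rfl

lemma eq_and_eq_of_isNormalIn_stabilizer_opairs [Fact p.Prime] (hn : 5 ≤ n) {P : OPairs n}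
    {N : Subgroup (Equiv.Perm (Fin n))} (hN : IsNormalIn N (stabilizer _ P)) (hne : N ≠ ⊥)
    (hp : IsPGroup p N) : (n = 5 ∧ p = 3) ∨ (n = 6 ∧ p = 2) := by
  have hcard : Nat.card {c // c ≠ P.1.1 ∧ c ≠ P.1.2} = n - 2 := by
    have hcompl : {c | c ≠ P.1.1 ∧ c ≠ P.1.2} = (({P.1.1, P.1.2} : Finset (Fin n)) : Set _)ᶜ := by
      ext c
      simp only [Finset.coe_pair, Set.mem_compl_iff, Set.mem_insert_iff, Set.mem_singleton_iff,
        not_or, Set.mem_ofPred_eq, ne_eq]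
    rw [← Set.coe_ofPred, hcompl, Nat.card_coe_set_eq, Set.ncard_compl, Set.ncard_coe_finset,
      Finset.card_pair P.2, Nat.card_fin]
  rw [stabilizer_opairs] at hN
  have := card_eq_and_eq_of_isPGroup_le_range_ofSubtype hN (by omega) hne hp
  omega

instance isPretransitive_opairs : IsPretransitive (Equiv.Perm (Fin n)) (OPairs n) where
  exists_smul_eq P Q := by
    obtain ⟨σ, hσ⟩ := is_two_pretransitive_iff.mp
      (Equiv.Perm.isMultiplyPretransitive (Fin n) 2) P.2 Q.2
    exact ⟨σ, opairs_smul_eq_iff.mpr hσ⟩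

lemma exists_mem_smul_opairs_eq_of_normal (hn : 5 ≤ n) {N : Subgroup (Equiv.Perm (Fin n))}
    [N.Normal] (hN : N ≠ ⊥) (P Q : OPairs n) : ∃ σ ∈ N, σ • P = Q := by
  have hcard : 5 ≤ Nat.card (Fin n) := by rwa [Nat.card_fin]
  have hle := Equiv.Perm.alternatingGroup_le_of_normal hcard ((nontrivial_iff_ne_bot N).mpr hN)
  have := alternatingGroup.isMultiplyPretransitive (Fin n)
  have : IsMultiplyPretransitive (alternatingGroup (Fin n)) (Fin n) 2 :=
    isMultiplyPretransitive_of_le (n := Nat.card (Fin n) - 2) (by omega) (Nat.sub_le _ _)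
  obtain ⟨σ, hσ⟩ := is_two_pretransitive_iff.mp this P.2 Q.2
  exact ⟨σ, hle σ.2, opairs_smul_eq_iff.mpr hσ⟩

lemma eq_one_of_forall_opairs_smul_eq (hn : 2 ≤ n) {σ : Equiv.Perm (Fin n)}
    (h : ∀ P : OPairs n, σ • P = P) : σ = 1 := by
  have := Fin.nontrivial_iff_two_le.mpr hn
  ext1 a
  obtain ⟨b, hb⟩ := exists_ne a
  exact (opairs_smul_eq_iff.mp (h ⟨(a, b), hb.symm⟩)).1

lemma pow_two_eq_one_of_opairs_smul_eq : ∀ (σ : Equiv.Perm (Fin 4)) (P : OPairs 4),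
    σ • P = P → σ ^ 2 = 1 := by
  set_option maxRecDepth 100000 in
  decide

lemma card_dvd_three_of_isPGroup {N : Subgroup (Equiv.Perm (Fin 5))} (hN : IsPGroup 3 N) :
    Nat.card N ∣ 3 := by
  have := Fact.mk Nat.prime_three
  obtain ⟨k, hk⟩ := IsPGroup.iff_card.mp hN
  have hdvd : 3 ^ k ∣ 3 * 40 := by
    have := N.card_subgroup_dvd_card
    rwa [hk, Nat.card_perm, Nat.card_fin] at this
  exact hk ▸ (Nat.Coprime.pow_left k (by norm_num)).dvd_of_dvd_mul_right hdvd

lemma isThreeCycle_of_mem_isPGroup {N : Subgroup (Equiv.Perm (Fin 5))} (hN : IsPGroup 3 N)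
    {σ : Equiv.Perm (Fin 5)} (hσ : σ ∈ N) (hne : σ ≠ 1) : σ.IsThreeCycle := by
  have horder : orderOf σ = 3 :=
    ((Nat.dvd_prime Nat.prime_three).mp
      ((N.orderOf_dvd_natCard hσ).trans (card_dvd_three_of_isPGroup hN))).resolve_left
      (orderOf_eq_one_iff.not.mpr hne)
  obtain ⟨m, hm⟩ := Equiv.Perm.cycleType_prime_order (horder ▸ Nat.prime_three)
  have hsum := σ.sum_cycleType_le
  rw [horder] at hm
  rw [hm, Multiset.sum_replicate, Fintype.card_fin, smul_eq_mul] at hsum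
  obtain rfl : m = 0 := by omega
  exact hm

lemma exists_orderOf_mul_conj_eq_five {σ : Equiv.Perm (Fin 5)} (hσ : σ.IsThreeCycle) :
    ∃ τ, orderOf (σ * (τ * σ * τ⁻¹)) = 5 := by
  -- Two `3`-cycles that share exactly one point multiply to a `5`-cycle.
  let c : Equiv.Perm (Fin 5) := Equiv.swap 0 1 * Equiv.swap 0 2
  let s : Equiv.Perm (Fin 5) := Equiv.swap 1 3 * Equiv.swap 2 4
  have hc : c.IsThreeCycle :=
    Equiv.Perm.isThreeCycle_swap_mul_swap_same (by decide) (by decide) (by decide)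
  have hcs : orderOf (c * (s * c * s⁻¹)) = 5 := by
    have := Fact.mk Nat.prime_five
    refine orderOf_eq_prime ?_ (by decide)
    rw [pow_succ, pow_succ, pow_succ, pow_two]
    set_option maxRecDepth 100000 in
    decide
  obtain ⟨g, rfl⟩ := isConj_iff.mp (Equiv.Perm.isConj_iff_cycleType_eq.mpr (hc.trans hσ.symm))
  refine ⟨g * s * g⁻¹, ?_⟩
  convert ((MulAut.conj g).orderOf_eq (c * (s * c * s⁻¹))).trans hcs using 2
  rw [MulAut.conj_apply]
  group

end PermutationGroups

section SymFive

variable {G G' : Type*} [Group G] [Group G'] {A B V X T K : Subgroup G} {t d e : G} {k q : ℕ}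

lemma exists_pow_pow_eq_one_and_map_ne_one [Finite G] (hq : q.Prime) (f : G →* G')
    (hd : orderOf (f d) = q) : ∃ m k, (d ^ m) ^ q ^ k = 1 ∧ f (d ^ m) ≠ 1 := by
  obtain ⟨k, m, hm, hkm⟩ := Nat.exists_eq_pow_mul_and_not_dvd (orderOf_pos d).ne' q hq.ne_one
  refine ⟨m, k, ?_, fun h ↦ hm ?_⟩
  · rw [← pow_mul, mul_comm, ← hkm, pow_orderOf_eq_one]
  · rw [map_pow] at h
    exact hd ▸ orderOf_dvd_of_pow_eq_one h

lemma centralizer_inf_centralizer_le_centralizer_singleton (he : e ∈ A ⊔ B) :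
    centralizer (A : Set G) ⊓ centralizer (B : Set G) ≤ centralizer {e} := by
  have hle : A ⊔ B ≤ centralizer (centralizer (A : Set G) ⊓ centralizer (B : Set G) :) :=
    sup_le (le_centralizer_iff.mpr inf_le_left) (le_centralizer_iff.mpr inf_le_right)
  exact fun c hc ↦ mem_centralizer_singleton_iff.mpr (mem_centralizer_iff.mp (hle he) c hc)

-- Of the possible indices `1`, `3` and `9`, only `1` is congruent to `1` modulo `5`.
lemma le_centralizer_singleton_of_relIndex_le_three [Finite V] (hV : IsPGroup 3 V)
    (hA : (centralizer (A : Set G)).relIndex V ≤ 3) (hB : (centralizer (B : Set G)).relIndex V ≤ 3)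
    (heAB : e ∈ A ⊔ B) (heV : e ∈ normalizer (V : Set G)) (he : e ^ 5 ^ k = 1) :
    V ≤ centralizer {e} := by
  have := Fact.mk Nat.prime_three
  have := Fact.mk Nat.prime_five
  obtain ⟨j, hj⟩ := IsPGroup.iff_card.mp hV
  have hmod : (centralizer {e}).relIndex V ≡ 1 [MOD 5] :=
    relIndex_centralizer_singleton_modEq_one heV he (hj ▸ Nat.Coprime.pow_left j (by norm_num))
  have hle : (centralizer {e}).relIndex V ≤ 3 ^ 2 := calc
    _ ≤ (centralizer (A : Set G) ⊓ centralizer (B : Set G)).relIndex V :=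
      relIndex_le_of_le_left (centralizer_inf_centralizer_le_centralizer_singleton heAB)
        index_ne_zero_of_finite
    _ ≤ _ := relIndex_inf_le
    _ ≤ 3 * 3 := Nat.mul_le_mul hA hB
  obtain ⟨i, -, hi⟩ := (Nat.dvd_prime_pow Nat.prime_three).mp
    (hj ▸ relIndex_dvd_card (centralizer {e}) V)
  rw [hi] at hmod hle
  have hi2 : i ≤ 2 := (Nat.pow_le_pow_iff_right (by norm_num)).mp hle
  obtain rfl : i = 0 := by
    interval_cases i <;> simp [Nat.ModEq] at hmod ⊢
  exact relIndex_eq_one.mp hi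

lemma exists_mem_sup_conj_smul_pow_five_pow_eq_one [Finite X] {φ : X →* Equiv.Perm (Fin 5)}
    (hφ : Function.Surjective φ) (hker : φ.ker = K.subgroupOf X) (hAX : A ≤ X) (hAK : ¬A ≤ K)
    (hA : IsPGroup 3 ((A.subgroupOf X).map φ)) :
    ∃ g ∈ X, ∃ e ∈ A ⊔ MulAut.conj g • A, e ∈ X ∧ e ∉ K ∧ ∃ k, e ^ 5 ^ k = 1 := by
  obtain ⟨a, haA, haK⟩ := SetLike.not_le_iff_exists.mp hAK
  lift a to X using hAX haA
  have hφa : φ a ≠ 1 := fun h1 ↦ haK <| by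
    rwa [← MonoidHom.mem_ker, hker] at h1
  obtain ⟨τ, hτ⟩ := exists_orderOf_mul_conj_eq_five
    (isThreeCycle_of_mem_isPGroup hA ⟨a, haA, rfl⟩ hφa)
  obtain ⟨g, rfl⟩ := hφ τ
  rw [← map_inv, ← map_mul, ← map_mul, ← map_mul] at hτ
  obtain ⟨m, k, hk, hm⟩ := exists_pow_pow_eq_one_and_map_ne_one Nat.prime_five φ hτ
  refine ⟨g, g.2, ((a * (g * a * g⁻¹)) ^ m : X), pow_mem (mul_mem ?_ ?_) m, Subtype.prop _,
    fun h ↦ hm ?_, k, congrArg Subtype.val hk⟩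
  · exact mem_sup_left haA
  · exact mem_sup_right (smul_mem_pointwise_smul _ (MulAut.conj (g : G)) _ haA)
  · rwa [← MonoidHom.mem_ker, hker]

lemma EdgeAmalgam.edgeKernel_eq_bot_of_isPGroup_three [Finite G] (h : EdgeAmalgam X T K t)
    {φ : X →* Equiv.Perm (Fin 5)} (hφ : Function.Surjective φ) (hker : φ.ker = K.subgroupOf X)
    (hR : IsPGroup 3 (edgeKernel K t)) : edgeKernel K t = ⊥ := by
  by_contra hne
  have := Fact.mk Nat.prime_three
  obtain ⟨A, hAT, hAK, hA⟩ := h.exists_relIndex_centralizer_le hR hne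
  have hAX : A ≤ X := hAT.trans ((pCore_le 3 T).trans h.arc_le)
  have hφA : IsPGroup 3 ((A.subgroupOf X).map φ) :=
    ((isPGroup_pCore.to_le hAT).comap_of_injective _ X.subtype_injective).map φ
  set V := centerIn (pCore 3 K)
  have hVX : X ≤ normalizer (V : Set G) := h.le_normalizer_centerIn_pCore_kernel
  have hAV : (centralizer (A : Set G)).relIndex V ≤ 3 := hA.trans <| by
    rw [← relIndex_subgroupOf hAX, ← hker, relIndex_ker]
    exact Nat.le_of_dvd (by norm_num) (card_dvd_three_of_isPGroup hφA)
  obtain ⟨g, hg, e, heA, heX, heK, k, he⟩ :=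
    exists_mem_sup_conj_smul_pow_five_pow_eq_one hφ hker hAX hAK hφA
  have hBV : (centralizer (↑(MulAut.conj g • A) : Set G)).relIndex V ≤ 3 := by
    have hgV : MulAut.conj g • V = V := mem_normalizer_iff_conj_smul_eq.mp (hVX hg)
    rwa [← relIndex_pointwise_smul (MulAut.conj g), hgV,
      show _ = centralizer _ from isConjEquivariant_centralizer g A] at hAV
  have hcent : V ≤ centralizer {e} := le_centralizer_singleton_of_relIndex_le_three
    (isPGroup_pCore.to_le (centerIn_le _)) hAV hBV heA (hVX heX) he
  refine heK (h.centralizer_centerIn_pCore_inf_le_kernel hR hne ⟨?_, heX⟩)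
  exact mem_centralizer_iff.mpr fun v hv ↦ mem_centralizer_singleton_iff.mp (hcent hv)

end SymFive

section LocalAction

variable {V : Type*} {Γ : SimpleGraph V} {G : Subgroup (Equiv.Perm V)} {x y v w : V} {g t : G}
  {n p : ℕ}

lemma forall_of_adj (hconn : Γ.Connected) {P : V → Prop} (hx : P x)
    (hadj : ∀ v w, P v → Γ.Adj v w → P w) (v : V) : P v := by
  induction (Γ.reachable_iff_reflTransGen x v).mp (hconn.preconnected x v) with
  | refl => exact hx
  | tail _ hvw ih => exact hadj _ _ ih hvw

lemma mem_ballStab_one (hconn : Γ.Connected) :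
    g ∈ ballStab Γ G x 1 ↔ g • x = x ∧ ∀ v, Γ.Adj x v → g • v = v := by
  simp only [ballStab, mem_iInf, mem_stabilizer_iff, Nat.le_one_iff_eq_zero_or_eq_one,
    hconn.dist_eq_zero_iff, SimpleGraph.dist_eq_one_iff_adj]
  exact ⟨fun h ↦ ⟨h x (.inl rfl), fun v hv ↦ h v (.inr hv)⟩,
    fun h v hv ↦ hv.elim (fun hxv ↦ hxv ▸ h.1) (h.2 v)⟩

lemma PreservesAdj.adj_smul_iff (hp : PreservesAdj Γ G) : Γ.Adj (g • v) (g • w) ↔ Γ.Adj v w :=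
  (hp g g.2 v w).symm

lemma conj_smul_stabilizer (g : G) (x : V) :
    MulAut.conj g • stabilizer G x = stabilizer G (g • x) :=
  (stabilizer_smul_eq_stabilizer_map_conj g x).symm

lemma PreservesAdj.conj_smul_ballStab_one (hp : PreservesAdj Γ G) (hconn : Γ.Connected) (g : G)
    (x : V) : MulAut.conj g • ballStab Γ G x 1 = ballStab Γ G (g • x) 1 := by
  ext a
  rw [mem_pointwise_smul_iff_inv_smul_mem, mem_ballStab_one hconn, mem_ballStab_one hconn,
    ← map_inv, MulAut.smul_def, MulAut.conj_apply, inv_inv]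
  simp only [mul_smul, inv_smul_eq_iff]
  refine and_congr_right fun _ ↦ ⟨fun h v hv ↦ ?_, fun h v hv ↦ h _ (hp.adj_smul_iff.mpr hv)⟩
  simpa only [smul_inv_smul] using h (g⁻¹ • v) (hp.adj_smul_iff (g := g).mp (by simpa using hv))

lemma exists_mem_smul_eq_of_stabilizer_le (hconn : Γ.Connected) (hp : PreservesAdj Γ G)
    (htrans : ∀ v w, Γ.Adj x v → Γ.Adj x w → ∃ g ∈ stabilizer G x, g • v = w) (hxy : Γ.Adj x y)
    (hx : t • x = y) {N : Subgroup G} (hN : stabilizer G x ≤ N) (ht : t ∈ N) (v : V) :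
    ∃ g ∈ N, g • x = v := by
  refine forall_of_adj hconn (P := fun v ↦ ∃ g ∈ N, g • x = v) ⟨1, one_mem N, one_smul G x⟩ ?_ v
  rintro _ w ⟨g, hg, rfl⟩ hw
  have hadj : Γ.Adj x (g⁻¹ • w) := hp.adj_smul_iff (g := g).mp (by simpa using hw)
  obtain ⟨s, hs, hsw⟩ := htrans y _ hxy hadj
  refine ⟨g * s * t, mul_mem (mul_mem hg (hN hs)) ht, ?_⟩
  rw [mul_smul, mul_smul, hx, hsw, smul_inv_smul]

lemma eq_bot_of_le_stabilizer {H : Subgroup G} (hH : H ≤ stabilizer G x)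
    (htrans : ∀ v, ∃ g ∈ normalizer (H : Set G), g • x = v) : H = ⊥ := by
  refine (eq_bot_iff_forall H).mpr fun a ha ↦ eq_of_smul_eq_smul fun v : V ↦ ?_
  obtain ⟨g, hg, rfl⟩ := htrans v
  rw [← mem_normalizer_iff_conj_smul_eq.mp hg] at ha
  have hmem := pointwise_smul_le_pointwise_smul_iff.mpr hH ha
  rw [conj_smul_stabilizer, mem_stabilizer_iff] at hmem
  rw [hmem, one_smul]

/-- The bijection `e` and the homomorphism `φ` identify the action of `G_x` on `Γ(x)` with the
action of `Sym(n)` on ordered pairs. -/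
structure IsLocalLabelling (e : Γ.neighborSet x ≃ OPairs n)
    (φ : stabilizer G x →* Equiv.Perm (Fin n)) : Prop where
  surjective : Function.Surjective φ
  symm_smul : ∀ (g : stabilizer G x) (v : Γ.neighborSet x),
    ((e.symm (φ g • e v) : Γ.neighborSet x) : V) = g • (v : V)

namespace IsLocalLabelling

variable {e : Γ.neighborSet x ≃ OPairs n} {φ : stabilizer G x →* Equiv.Perm (Fin n)}

lemma smul_eq_iff (h : IsLocalLabelling e φ) {g : stabilizer G x} {v w : Γ.neighborSet x} :
    φ g • e v = e w ↔ g • (v : V) = w := by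
  rw [← h.symm_smul, ← Equiv.symm_apply_eq, Subtype.ext_iff]

lemma ker_eq (h : IsLocalLabelling e φ) (hconn : Γ.Connected) (hn : 2 ≤ n) :
    φ.ker = (ballStab Γ G x 1).subgroupOf (stabilizer G x) := by
  ext g
  rw [MonoidHom.mem_ker, mem_subgroupOf, mem_ballStab_one hconn]
  refine ⟨fun hg ↦ ⟨g.2, fun v hv ↦ ?_⟩, fun hg ↦ eq_one_of_forall_opairs_smul_eq hn fun P ↦ ?_⟩
  · exact h.smul_eq_iff (v := ⟨v, hv⟩) (w := ⟨v, hv⟩).mp (by rw [hg, one_smul])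
  · obtain ⟨v, rfl⟩ := e.surjective P
    exact h.smul_eq_iff.mpr (hg.2 v v.2)

lemma exists_mem_stabilizer_smul_eq (h : IsLocalLabelling e φ) (hv : Γ.Adj x v)
    (hw : Γ.Adj x w) : ∃ g ∈ stabilizer G x, g • v = w := by
  obtain ⟨σ, hσ⟩ := exists_smul_eq (Equiv.Perm (Fin n)) (e ⟨v, hv⟩) (e ⟨w, hw⟩)
  obtain ⟨g, rfl⟩ := h.surjective σ
  exact ⟨g, g.2, h.smul_eq_iff.mp hσ⟩

lemma exists_flip [IsPretransitive G V] (h : IsLocalLabelling e φ) (hp : PreservesAdj Γ G)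
    (hxy : Γ.Adj x y) : ∃ t : G, t • x = y ∧ t • y = x := by
  obtain ⟨g, hg⟩ := exists_smul_eq G y x
  have hadj : Γ.Adj x (g • x) := by simpa only [hg] using hp.adj_smul_iff (g := g).mpr hxy.symm
  obtain ⟨s, hs, hsy⟩ := h.exists_mem_stabilizer_smul_eq hadj hxy
  exact ⟨s * g, by rw [mul_smul, hsy], by rw [mul_smul, hg, hs]⟩

lemma map_subgroupOf_ne_bot (h : IsLocalLabelling e φ) (hconn : Γ.Connected) (hn : 2 ≤ n)
    {M : Subgroup G} (hM : M ≤ stabilizer G x) (hMK : ¬M ≤ ballStab Γ G x 1) :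
    (M.subgroupOf (stabilizer G x)).map φ ≠ ⊥ := by
  rw [Ne, Subgroup.map_eq_bot_iff, h.ker_eq hconn hn]
  exact fun hle ↦ hMK fun m hm ↦ hle (show (⟨m, hM hm⟩ : stabilizer G x) ∈ _ from hm)

lemma map_stabilizer_inf_stabilizer (h : IsLocalLabelling e φ) (hxy : Γ.Adj x y) :
    ((stabilizer G x ⊓ stabilizer G y).subgroupOf (stabilizer G x)).map φ =
      stabilizer (Equiv.Perm (Fin n)) (e ⟨y, hxy⟩) := by
  ext σ
  refine ⟨?_, fun hσ ↦ ?_⟩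
  · rintro ⟨g, hg, rfl⟩
    exact h.smul_eq_iff.mpr hg.2
  · obtain ⟨g, rfl⟩ := h.surjective σ
    exact ⟨g, ⟨g.2, h.smul_eq_iff.mp hσ⟩, rfl⟩

lemma le_sup_stabilizer_inf (h : IsLocalLabelling e φ) (hconn : Γ.Connected) (hn : 5 ≤ n)
    (hxy : Γ.Adj x y) {M : Subgroup G} (hM : IsNormalIn M (stabilizer G x))
    (hMK : ¬M ≤ ballStab Γ G x 1) :
    stabilizer G x ≤ M ⊔ stabilizer G x ⊓ stabilizer G y := by
  intro g hg
  have := normal_subgroupOf_of_le_normalizer hM.2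
  have := Normal.map (H := M.subgroupOf (stabilizer G x)) inferInstance φ h.surjective
  obtain ⟨_, ⟨m, hm, rfl⟩, hme⟩ := exists_mem_smul_opairs_eq_of_normal hn
    (h.map_subgroupOf_ne_bot hconn (by omega) hM.1 hMK) (e ⟨y, hxy⟩) (φ ⟨g, hg⟩ • e ⟨y, hxy⟩)
  have hfix : (m⁻¹ * ⟨g, hg⟩) • y = y :=
    h.smul_eq_iff (v := ⟨y, hxy⟩) (w := ⟨y, hxy⟩).mp <| by
      rw [map_mul, map_inv, mul_smul, inv_smul_eq_iff, hme]
  rw [← mul_inv_cancel_left (m : G) g]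
  exact mul_mem_sup hm ⟨(m⁻¹ * ⟨g, hg⟩).2, hfix⟩

lemma edgeAmalgam (h : IsLocalLabelling e φ) (hconn : Γ.Connected) (hp : PreservesAdj Γ G)
    (hn : 5 ≤ n) (hxy : Γ.Adj x y) (hx : t • x = y) (hy : t • y = x) :
    EdgeAmalgam (stabilizer G x) (stabilizer G x ⊓ stabilizer G y) (ballStab Γ G x 1) t where
  arc_le := inf_le_left
  kernel_le g hg := ((mem_ballStab_one hconn).mp hg).imp_right fun hg ↦ hg y hxy
  le_normalizer g hg := by
    rw [mem_normalizer_iff_conj_smul_eq, hp.conj_smul_ballStab_one hconn, hg]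
  conj_arc := by rw [smul_inf, conj_smul_stabilizer, conj_smul_stabilizer, hx, hy, inf_comm]
  conj_conj_kernel := by
    rw [hp.conj_smul_ballStab_one hconn, hp.conj_smul_ballStab_one hconn, hx, hy]
  faithful H hH hX ht := eq_bot_of_le_stabilizer (hH.trans inf_le_left) <|
    exists_mem_smul_eq_of_stabilizer_le hconn hp
      (fun _ _ ↦ h.exists_mem_stabilizer_smul_eq) hxy hx hX (mem_normalizer_iff_conj_smul_eq.mpr ht)
  quasiprimitive _ := h.le_sup_stabilizer_inf hconn hn hxy

lemma eq_and_eq_of_isNormalIn [Fact p.Prime] (h : IsLocalLabelling e φ) (hconn : Γ.Connected)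
    (hn : 5 ≤ n) (hxy : Γ.Adj x y) {P : Subgroup G}
    (hP : IsNormalIn P (stabilizer G x ⊓ stabilizer G y)) (hPp : IsPGroup p P)
    (hPK : ¬P ≤ ballStab Γ G x 1) : n = 5 ∧ p = 3 ∨ n = 6 ∧ p = 2 := by
  have hnormal := (hP.comap (stabilizer G x).subtype).map φ
  rw [← subgroupOf, ← subgroupOf, h.map_stabilizer_inf_stabilizer hxy] at hnormal
  exact eq_and_eq_of_isNormalIn_stabilizer_opairs hn hnormal
    (h.map_subgroupOf_ne_bot hconn (by omega) (hP.1.trans inf_le_left) hPK)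
    ((hPp.comap_of_injective _ (stabilizer G x).subtype_injective).map φ)

lemma eq_six_and_isPGroup_edgeKernel [Finite V] (h : IsLocalLabelling e φ) (hconn : Γ.Connected)
    (hp : PreservesAdj Γ G) (hn : 5 ≤ n) (hxy : Γ.Adj x y) (hx : t • x = y) (hy : t • y = x)
    (hne : edgeKernel (ballStab Γ G x 1) t ≠ ⊥) :
    n = 6 ∧ IsPGroup 2 (edgeKernel (ballStab Γ G x 1) t) := by
  have hA := h.edgeAmalgam hconn hp hn hxy hx hy
  obtain ⟨p, hprime, hcore⟩ := hA.exists_pCore_not_le_conj_kernel hne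
  have := Fact.mk hprime
  have hR : IsPGroup p (edgeKernel (ballStab Γ G x 1) t) := hA.isPGroup_edgeKernel hcore
  obtain ⟨rfl, rfl⟩ | ⟨rfl, rfl⟩ := h.eq_and_eq_of_isNormalIn hconn hn hxy
    (hA.isNormalIn_conj_pCore p) (isPGroup_pCore.map _) (hA.conj_le_kernel_iff.not.mpr hcore)
  · exact absurd (hA.edgeKernel_eq_bot_of_isPGroup_three h.surjective
      (h.ker_eq hconn (by norm_num)) hR) hne
  · exact ⟨rfl, hR⟩

-- In `Sym(4)` the stabiliser of an ordered pair has order `2`, so it contains no nontrivial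
-- element of odd order.
lemma mem_ballStab_one_of_adj {e : Γ.neighborSet x ≃ OPairs 4}
    {φ : stabilizer G x →* Equiv.Perm (Fin 4)} (h : IsLocalLabelling e φ) (hconn : Γ.Connected)
    (hv : Γ.Adj v x) (hg : g ∈ ballStab Γ G v 1) (hodd : (orderOf g).Coprime 2) :
    g ∈ ballStab Γ G x 1 := by
  have hfix := (mem_ballStab_one hconn).mp hg
  let a : stabilizer G x := ⟨g, hfix.2 x hv⟩
  have hsq : φ a ^ 2 = 1 := pow_two_eq_one_of_opairs_smul_eq _ (e ⟨v, hv.symm⟩) <|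
    h.smul_eq_iff.mpr hfix.1
  have hdvd : orderOf (φ a) ∣ orderOf g := orderOf_mk g a.2 ▸ orderOf_map_dvd φ a
  have hone : φ a = 1 := orderOf_eq_one_iff.mp <|
    Nat.eq_one_of_dvd_coprimes hodd hdvd (orderOf_dvd_of_pow_eq_one hsq)
  rwa [← MonoidHom.mem_ker, h.ker_eq hconn (by norm_num), mem_subgroupOf] at hone

end IsLocalLabelling

lemma isPGroup_two_ballStab_one [Finite V] (hconn : Γ.Connected)
    (hlocal : ∀ x : V, ∃ (e : Γ.neighborSet x ≃ OPairs 4)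
      (φ : stabilizer G x →* Equiv.Perm (Fin 4)), IsLocalLabelling e φ) (x : V) :
    IsPGroup 2 (ballStab Γ G x 1) := by
  refine isPGroup_of_forall_coprime_orderOf fun g hodd ↦ Subtype.ext ?_
  rw [← orderOf_coe] at hodd
  refine eq_of_smul_eq_smul fun v : V ↦ ?_
  have hall : (g : G) ∈ ballStab Γ G v 1 := by
    refine forall_of_adj hconn (P := (g.1 ∈ ballStab Γ G · 1)) g.2 (fun u w hu huw ↦ ?_) v
    obtain ⟨e, φ, h⟩ := hlocal w
    exact h.mem_ballStab_one_of_adj hconn huw hu hodd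
  rw [((mem_ballStab_one hconn).mp hall).1, OneMemClass.coe_one, one_smul]

end LocalAction

/-- if `(Γ,G)` is locally `L` for `L` the group induced by `Sym(n)` on
ordered pairs of distinct elements (`n ≥ 4`) and `G_{xy}^{[1]} ≠ 1` for an edge `{x,y}`,
then `n = 4` or `n = 6`, and `G_{xy}^{[1]}` is a `2`-group. -/
theorem stmt_9 {V : Type*} [Fintype V] (n : ℕ) (hn : 4 ≤ n)
    (Γ : SimpleGraph V) (hconn : Γ.Connected)
    (G : Subgroup (Equiv.Perm V)) (hloc : IsLocallyOPairs n Γ G)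
    (x y : V) (hxy : Γ.Adj x y)
    (hne : ballStab Γ G x 1 ⊓ ballStab Γ G y 1 ≠ ⊥) :
    (n = 4 ∨ n = 6) ∧ IsPGroup 2 ↥(ballStab Γ G x 1 ⊓ ballStab Γ G y 1) := by
  obtain ⟨hp, _, hlocal⟩ := hloc
  have hlabel (v : V) : ∃ (e : Γ.neighborSet v ≃ OPairs n)
      (φ : stabilizer G v →* Equiv.Perm (Fin n)), IsLocalLabelling e φ := by
    obtain ⟨e, φ, hφ, he⟩ := hlocal v
    exact ⟨e, φ, hφ, he⟩
  obtain rfl | hn := hn.eq_or_lt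
  · exact ⟨.inl rfl, (isPGroup_two_ballStab_one hconn hlabel x).to_le inf_le_left⟩
  · obtain ⟨e, φ, h⟩ := hlabel x
    obtain ⟨t, hx, hy⟩ := h.exists_flip hp hxy
    have hR : ballStab Γ G x 1 ⊓ ballStab Γ G y 1 = edgeKernel (ballStab Γ G x 1) t := by
      rw [edgeKernel, hp.conj_smul_ballStab_one hconn, hx]
    rw [hR] at hne ⊢
    exact (h.eq_six_and_isPGroup_edgeKernel hconn hp hn hxy hx hy hne).imp_left .inr
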